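/- For n ≥ 3 and negative reals a_1,…,a_n, let circ(a_1,…,a_n) be the symmetric n×n matrix with entries M_{i,i+1} = M_{i+1,i} = a_i (indices mod n, so M_{1,n} = M_{n,1} = a_n) and all other entries zero. If n ≡ 0 mod 4 and the product of the a_k with k even equals the product of the a_k with k odd, then circ(a_1,…,a_n) is degenerate with signature (n/2 - 1, n/2 - 1); otherwise it is nondegenerate with signature (n/2, n/2) if n is even, ((n-1)/2, (n+1)/2) if n ≡ 1 mod 4, and ((n+1)/2, (n-1)/2) if n ≡ 3 mod 4. -/

import Mathlib

/-- The cyclic weighted adjacency matrix of the `n`-cycle with edge weights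
`a i` on the edge `{i, i+1}` (indices mod `n`). -/
def circMat (n : ℕ) [NeZero n] (a : Fin n → ℝ) : Matrix (Fin n) (Fin n) ℝ :=
  fun i j => if j = i + 1 then a i else if i = j + 1 then a j else 0

open Matrix in
lemma inj_card {n m : ℕ} (A : Matrix (Fin n) (Fin n) ℝ) (h : A.IsHermitian)
    (p : Fin n → Prop) [DecidablePred p]
    (L : (Fin n → ℝ) →ₗ[ℝ] (Fin m → ℝ))
    (hL : ∀ c : Fin n → ℝ, (∀ i, ¬ p i → c i = 0) → ∀ x : Fin n → ℝ,
      L x = 0 → (A *ᵥ x = ∑ i, (h.eigenvalues i * c i) • (h.eigenvectorBasis i).ofLp) →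
      (x ⬝ᵥ A *ᵥ x = ∑ i, h.eigenvalues i * (c i)^2) → 
      (x = 0 → c = 0) → c = 0) :
    Fintype.card {i // p i} ≤ m := by
  let E : ({i // p i} → ℝ) →ₗ[ℝ] (Fin n → ℝ) := Function.ExtendByZero.linearMap ℝ Subtype.val
  let B : (Fin n → ℝ) →ₗ[ℝ] (Fin n → ℝ) := 
    Fintype.linearCombination ℝ (fun i => (h.eigenvectorBasis i).ofLp)
  have hB : ∀ c, B c = ∑ i, c i • (h.eigenvectorBasis i).ofLp := fun c => by
    simp [B, Fintype.linearCombination_apply]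
  have horth : ∀ i j, (h.eigenvectorBasis i).ofLp ⬝ᵥ (h.eigenvectorBasis j).ofLp = if i = j then 1 else 0 := by
    intro i j
    have := (orthonormal_iff_ite.mp h.eigenvectorBasis.orthonormal) j i
    rw [EuclideanSpace.inner_eq_star_dotProduct] at this
    simp only [star_trivial] at this
    rw [this]; simp [eq_comm]
  have hdot : ∀ c d, B c ⬝ᵥ B d = ∑ i, c i * d i := by
    intro c d
    rw [hB, hB, sum_dotProduct]
    refine Finset.sum_congr rfl fun i _ => ?_
    rw [dotProduct_sum]
    simp [horth, mul_comm]
  have hA : ∀ c, A *ᵥ (B c) = B (fun i => h.eigenvalues i * c i) := by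
    intro c
    rw [hB, hB, mulVec_sum]
    refine Finset.sum_congr rfl fun i _ => ?_
    rw [mulVec_smul, h.mulVec_eigenvectorBasis, smul_smul, mul_comm]
  have hinj : Function.Injective (L ∘ₗ B ∘ₗ E) := by
    rw [← LinearMap.ker_eq_bot, LinearMap.ker_eq_bot']
    intro c hc
    have h0 : E c = 0 := by
      refine hL (E c) ?_ (B (E c)) hc (by rw [hA, hB]) ?_ ?_
      · intro i hi
        simp only [E, Function.ExtendByZero.linearMap_apply]
        rw [Function.extend_apply']
        · rfl
        · rintro ⟨⟨j, hj⟩, rfl⟩; exact hi hj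
      · rw [hA, hdot]
        refine Finset.sum_congr rfl fun i _ => by ring
      · intro h1
        have := hdot (E c) (E c)
        rw [h1] at this
        simp only [zero_dotProduct] at this
        have h2 := (Finset.sum_eq_zero_iff_of_nonneg (fun i _ => mul_self_nonneg (E c i))).mp this.symm
        ext i
        simpa using h2 i (Finset.mem_univ _)
    ext i
    have := congrFun h0 i.1
    simp only [E, Function.ExtendByZero.linearMap_apply] at this
    rw [Subtype.val_injective.extend_apply] at this
    simpa using this
  simpa using LinearMap.finrank_le_finrank_of_injective hinj

open Matrix in
lemma neg_card {n m : ℕ} (A : Matrix (Fin n) (Fin n) ℝ) (h : A.IsHermitian)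
    (L : (Fin n → ℝ) →ₗ[ℝ] (Fin m → ℝ))
    (hL : ∀ x, L x = 0 → 0 ≤ x ⬝ᵥ A *ᵥ x) :
    Fintype.card {i // h.eigenvalues i < 0} ≤ m := by
  refine inj_card A h _ L fun c hc x hx _ hq _ => ?_
  have h1 := hL x hx
  have h3 : ∀ i ∈ Finset.univ, 0 ≤ -(h.eigenvalues i * c i ^ 2) := by
    intro i _
    by_cases hi : h.eigenvalues i < 0
    · nlinarith [sq_nonneg (c i)]
    · simp [hc i hi]
  have h2 : ∑ i, -(h.eigenvalues i * c i ^ 2) = 0 := by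
    refine le_antisymm ?_ (Finset.sum_nonneg h3)
    rw [Finset.sum_neg_distrib]; linarith
  rw [Finset.sum_eq_zero_iff_of_nonneg h3] at h2
  ext i
  by_cases hi : h.eigenvalues i < 0
  · simpa [hi.ne] using h2 i (Finset.mem_univ _)
  · exact hc i hi

open Matrix in
lemma pos_card {n m : ℕ} (A : Matrix (Fin n) (Fin n) ℝ) (h : A.IsHermitian)
    (L : (Fin n → ℝ) →ₗ[ℝ] (Fin m → ℝ))
    (hL : ∀ x, L x = 0 → x ⬝ᵥ A *ᵥ x ≤ 0) :
    Fintype.card {i // 0 < h.eigenvalues i} ≤ m := by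
  refine inj_card A h _ L fun c hc x hx _ hq _ => ?_
  have h1 := hL x hx
  have h3 : ∀ i ∈ Finset.univ, 0 ≤ (h.eigenvalues i * c i ^ 2) := by
    intro i _
    by_cases hi : 0 < h.eigenvalues i
    · positivity
    · simp [hc i hi]
  have h2 : ∑ i, (h.eigenvalues i * c i ^ 2) = 0 := by
    refine le_antisymm ?_ (Finset.sum_nonneg h3)
    linarith
  rw [Finset.sum_eq_zero_iff_of_nonneg h3] at h2
  ext i
  by_cases hi : 0 < h.eigenvalues i
  · simpa [hi.ne'] using h2 i (Finset.mem_univ _)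
  · exact hc i hi

open Matrix in
lemma zero_card {n m : ℕ} (A : Matrix (Fin n) (Fin n) ℝ) (h : A.IsHermitian)
    (L : (Fin n → ℝ) →ₗ[ℝ] (Fin m → ℝ))
    (hL : ∀ x, L x = 0 → A *ᵥ x = 0 → x = 0) :
    Fintype.card {i // h.eigenvalues i = 0} ≤ m := by
  refine inj_card A h _ L fun c hc x hx hA hq hx0 => hx0 (hL x hx ?_)
  rw [hA]
  refine Finset.sum_eq_zero fun i _ => ?_
  by_cases hi : h.eigenvalues i = 0
  · simp [hi]
  · simp [hc i hi]

lemma tri_card {n : ℕ} (f : Fin n → ℝ) :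
    Fintype.card {i // 0 < f i} + Fintype.card {i // f i < 0} + Fintype.card {i // f i = 0} = n := by
  simp only [Fintype.card_subtype, Finset.card_filter]
  rw [← Finset.sum_add_distrib, ← Finset.sum_add_distrib]
  have : ∀ i, ((if 0 < f i then 1 else 0) + (if f i < 0 then 1 else 0) + (if f i = 0 then 1 else 0) : ℕ) = 1 := by
    intro i
    rcases lt_trichotomy (f i) 0 with h | h | h
    · simp [h, h.not_gt, h.ne]
    · simp [h]
    · simp [h, h.not_gt, h.ne']
  simp [this]

lemma det_iff {n : ℕ} (A : Matrix (Fin n) (Fin n) ℝ) (h : A.IsHermitian) :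
    A.det = 0 ↔ 0 < Fintype.card {i // h.eigenvalues i = 0} := by
  rw [h.det_eq_prod_eigenvalues, Fintype.card_pos_iff]
  simp [Finset.prod_eq_zero_iff, nonempty_subtype]

/-- periodic extension -/
def perx {n : ℕ} [NeZero n] (x : Fin n → ℝ) (k : ℕ) : ℝ := x (Fin.ofNat n k)

lemma perx_per {n : ℕ} [NeZero n] (x : Fin n → ℝ) (k : ℕ) : perx x (k + n) = perx x k := by
  unfold perx; congr 1; ext; simp

lemma perx_val {n : ℕ} [NeZero n] (x : Fin n → ℝ) (i : Fin n) : perx x i = x i := by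
  unfold perx; congr 1; ext; simp

lemma perx_succ {n : ℕ} [NeZero n] (x : Fin n → ℝ) (i : Fin n) : perx x (i + 1) = x (i + 1) := by
  unfold perx; congr 1; ext; simp [Fin.val_add]

lemma ofNat_succ {n : ℕ} [NeZero n] (k : ℕ) : Fin.ofNat n (k+1) = Fin.ofNat n k + 1 := by
  ext; simp [Fin.val_add]

open Matrix in
lemma circ_mulVec (n : ℕ) [NeZero n] (hn : 3 ≤ n) (a x : Fin n → ℝ) (i : Fin n) :
    (circMat n a *ᵥ x) (i + 1) = a i * x i + a (i + 1) * x (i + 1 + 1) := by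
  have hne : i + 1 + 1 ≠ i := by
    intro h
    have : (1 + 1 : Fin n) = 0 := by
      rw [add_assoc] at h; simpa using h
    have := congrArg Fin.val this
    simp [Fin.val_add] at this
    rw [Nat.mod_eq_of_lt (by omega)] at this
    omega
  unfold circMat
  simp only [mulVec, dotProduct]
  have : ∀ j, (if j = i + 1 + 1 then a (i+1) else if i + 1 = j + 1 then a j else 0) * x j
     = (if j = i then a i * x i else 0) + (if j = i + 1 + 1 then a (i+1) * x (i+1+1) else 0) := by
    intro j
    by_cases h1 : j = i + 1 + 1
    · subst h1; simp [hne]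
    · by_cases h2 : j = i
      · subst h2; simp [h1]
      · have : ¬ (i = j) := fun h => h2 h.symm
        simp [h1, h2, this]
  simp only [this, Finset.sum_add_distrib]
  simp

open Matrix in
lemma circ_ker (n : ℕ) [NeZero n] (hn : 3 ≤ n) (a x : Fin n → ℝ) (h : circMat n a *ᵥ x = 0) (k : ℕ) :
    perx a k * perx x k + perx a (k+1) * perx x (k+2) = 0 := by
  have := circ_mulVec n hn a x (Fin.ofNat n k)
  rw [h] at this
  unfold perx
  rw [ofNat_succ, ofNat_succ, ofNat_succ, ← this]
  rfl

open Matrix in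
lemma circ_quad (n : ℕ) [NeZero n] (hn : 3 ≤ n) (a x : Fin n → ℝ) :
    x ⬝ᵥ circMat n a *ᵥ x = 2 * ∑ i ∈ Finset.range n, perx a i * perx x i * perx x (i+1) := by
  rw [Finset.sum_range]
  simp only [perx_val, perx_succ]
  unfold dotProduct
  rw [← Equiv.sum_comp (Equiv.addRight (1 : Fin n))]
  simp only [Equiv.coe_addRight, circ_mulVec n hn, mul_add, Finset.sum_add_distrib]
  have := Equiv.sum_comp (Equiv.addRight (1 : Fin n)) (fun i => a i * x i * x (i+1))
  simp only [Equiv.coe_addRight] at this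
  rw [two_mul]
  nth_rw 2 [← this]
  congr 1 <;> exact Finset.sum_congr rfl fun i _ => by ring

lemma quad_shift (n : ℕ) (f : ℕ → ℝ) (hf : ∀ k, f (k+n) = f k) :
    ∑ i ∈ Finset.range n, f i = ∑ i ∈ Finset.range n, f (i+1) := by
  have h1 := Finset.sum_range_succ f n
  have h2 := Finset.sum_range_succ' f n
  have := hf 0
  simp at this
  linarith

lemma sum_pairs (m : ℕ) (f : ℕ → ℝ) : ∑ i ∈ Finset.range (2*m), f i
    = ∑ i ∈ Finset.range m, (f (2*i) + f (2*i+1)) := by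
  induction m with
  | zero => simp
  | succ k ih =>
    rw [show 2*(k+1) = 2*k+1+1 by ring, Finset.sum_range_succ, Finset.sum_range_succ, ih,
      Finset.sum_range_succ]; ring

/-- chain solution -/
lemma chain (b y : ℕ → ℝ) (s m : ℕ)
    (h : ∀ i < m, b (2*i+s) * y (2*i+s) + b (2*i+s+1) * y (2*i+s+2) = 0) :
    (∏ i ∈ Finset.range m, -b (2*i+s+1)) * y (2*m+s)
      = (-1)^m * (∏ i ∈ Finset.range m, -b (2*i+s)) * y s := by
  induction m with
  | zero => simp
  | succ k ih =>
    have ih := ih fun i hi => h i (by omega)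
    have hk := h k (by omega)
    rw [Finset.prod_range_succ, Finset.prod_range_succ, pow_succ,
      show 2*(k+1)+s = 2*k+s+2 by ring]
    linear_combination (b (2*k+s)) * ih - (∏ i ∈ Finset.range k, -b (2*i+s+1)) * hk

lemma vanish (b y : ℕ → ℝ) (hb : ∀ k, b k < 0)
    (h : ∀ i, b i * y i + b (i+1) * y (i+2) = 0) (h0 : y 0 = 0) (h1 : y 1 = 0) (k : ℕ) :
    y k = 0 ∧ y (k+1) = 0 := by
  induction k with
  | zero => exact ⟨h0, h1⟩
  | succ k ih =>
    refine ⟨ih.2, ?_⟩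
    have := h k
    rw [ih.1] at this
    simpa [(hb (k+1)).ne] using this

lemma prod_filter0 (m : ℕ) (b : ℕ → ℝ) : ∏ i ∈ Finset.range (2*m) with i % 2 = 0, b i
    = ∏ i ∈ Finset.range m, b (2*i) := by
  rw [Finset.prod_filter]
  induction m with
  | zero => simp
  | succ k ih =>
    rw [show 2*(k+1) = 2*k+1+1 by ring, Finset.prod_range_succ, Finset.prod_range_succ, ih,
      Finset.prod_range_succ]
    simp [Nat.add_mod]

lemma prod_filter1 (m : ℕ) (b : ℕ → ℝ) : ∏ i ∈ Finset.range (2*m) with i % 2 = 1, b i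
    = ∏ i ∈ Finset.range m, b (2*i+1) := by
  rw [Finset.prod_filter]
  induction m with
  | zero => simp
  | succ k ih =>
    rw [show 2*(k+1) = 2*k+1+1 by ring, Finset.prod_range_succ, Finset.prod_range_succ, ih,
      Finset.prod_range_succ]
    simp [Nat.add_mod]

lemma prod_fin (n : ℕ) [NeZero n] (a : Fin n → ℝ) (r : ℕ) : 
   ∏ k ∈ Finset.univ.filter (fun k : Fin n => (k : ℕ) % 2 = r), a k = 
   ∏ i ∈ Finset.range n with i % 2 = r, perx a i := by
  rw [Finset.prod_filter, Finset.prod_filter, Finset.prod_range]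
  simp [perx_val]

/-- even coordinates -/
def evenL (n : ℕ) [NeZero n] (m : ℕ) : (Fin n → ℝ) →ₗ[ℝ] (Fin m → ℝ) :=
  LinearMap.pi fun i => LinearMap.proj (Fin.ofNat n (2 * (i : ℕ)))

/-- chain constraints -/
noncomputable def chainL (n : ℕ) [NeZero n] (a : Fin n → ℝ) (m : ℕ) :
    (Fin n → ℝ) →ₗ[ℝ] (Fin m → ℝ) :=
  LinearMap.pi fun i => perx a (2 * (i : ℕ) + 1) • LinearMap.proj (Fin.ofNat n (2 * (i : ℕ) + 1))
    + perx a (2 * (i : ℕ) + 2) • LinearMap.proj (Fin.ofNat n (2 * (i : ℕ) + 3))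

lemma evenL_zero (n : ℕ) [NeZero n] (m : ℕ) (x : Fin n → ℝ) (h : evenL n m x = 0) (i : ℕ)
    (hi : i < m) : perx x (2 * i) = 0 := by
  have := congrFun h ⟨i, hi⟩
  simpa [evenL, perx] using this

lemma chainL_zero (n : ℕ) [NeZero n] (a : Fin n → ℝ) (m : ℕ) (x : Fin n → ℝ)
    (h : chainL n a m x = 0) (i : ℕ) (hi : i < m) :
    perx a (2 * i + 1) * perx x (2 * i + 1) + perx a (2 * i + 1 + 1) * perx x (2 * i + 1 + 2) = 0 := by
  have := congrFun h ⟨i, hi⟩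
  simpa [chainL, perx] using this

open Matrix in
lemma iso_quad (n : ℕ) [NeZero n] (hn : 3 ≤ n) (a x : Fin n → ℝ)
    (h : evenL n ((n + 1) / 2) x = 0) : x ⬝ᵥ circMat n a *ᵥ x = 0 := by
  rw [circ_quad n hn, Finset.sum_eq_zero, mul_zero]
  intro i hi
  rw [Finset.mem_range] at hi
  have h0 := evenL_zero n _ x h
  rcases Nat.even_or_odd' i with ⟨k, rfl | rfl⟩
  · rw [h0 k (by omega)]; ring
  · by_cases hk : 2 * k + 1 + 1 = n
    · have h1 := perx_per x 0
      rw [zero_add] at h1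
      rw [hk, h1, h0 0 (by omega)]; ring
    · rw [show 2 * k + 1 + 1 = 2 * (k + 1) by ring, h0 (k+1) (by omega)]; ring

open Matrix in
lemma odd_quad (m : ℕ) (hm : 1 ≤ m) (a x : Fin (2 * m + 1) → ℝ)
    (h : chainL (2 * m + 1) a m x = 0) :
    x ⬝ᵥ circMat (2 * m + 1) a *ᵥ x = 2 * (perx a 0 * perx x 0 * perx x 1) := by
  rw [circ_quad _ (by omega), Finset.sum_range_succ', sum_pairs, Finset.sum_eq_zero]
  · simp
  intro i hi
  have := chainL_zero _ a m x h i (Finset.mem_range.mp hi)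
  linear_combination (perx x (2 * i + 2)) * this

lemma perx_neg {n : ℕ} [NeZero n] (a : Fin n → ℝ) (ha : ∀ i, a i < 0) (k : ℕ) : perx a k < 0 := ha _

lemma prod_pos' {n : ℕ} [NeZero n] (a : Fin n → ℝ) (ha : ∀ i, a i < 0) (m : ℕ) (f : ℕ → ℕ) :
    0 < ∏ i ∈ Finset.range m, -perx a (f i) :=
  Finset.prod_pos fun i _ => neg_pos.mpr (perx_neg a ha _)

lemma odd_sign (m : ℕ) (a x : Fin (2 * m + 1) → ℝ) (ha : ∀ i, a i < 0)
    (h : chainL (2 * m + 1) a m x = 0) :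
    0 ≤ (-1)^m * (perx x 0 * perx x 1) := by
  have h1 := chain (perx a) (perx x) 1 m (chainL_zero _ a m x h)
  have h2 := perx_per x 0
  rw [zero_add] at h2
  rw [h2] at h1
  have hR := prod_pos' a ha m (fun i => 2 * i + 1 + 1)
  have hP := prod_pos' a ha m (fun i => 2 * i + 1)
  set R := ∏ i ∈ Finset.range m, -perx a (2 * i + 1 + 1)
  set P := ∏ i ∈ Finset.range m, -perx a (2 * i + 1)
  have h3 : ((-1 : ℝ)^m) * (-1)^m = 1 := by rw [← mul_pow]; simp
  have h4 : R * ((-1)^m * (perx x 0 * perx x 1)) = P * perx x 1 ^ 2 := by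
    linear_combination ((-1)^m * perx x 1) * h1 + P * perx x 1 ^ 2 * h3
  by_contra hc
  push Not at hc
  have := mul_neg_of_pos_of_neg hR hc
  nlinarith [mul_nonneg hP.le (sq_nonneg (perx x 1))]

open Matrix in
lemma even_quad (m : ℕ) [NeZero (2 * m)] (hm : 2 ≤ m) (hme : Even m) (a x : Fin (2 * m) → ℝ)
    (ha : ∀ i, a i < 0)
    (hp : ∏ i ∈ Finset.range m, perx a (2 * i) = ∏ i ∈ Finset.range m, perx a (2 * i + 1))
    (h : chainL (2 * m) a (m - 1) x = 0) :
    x ⬝ᵥ circMat (2 * m) a *ᵥ x = 0 := by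
  obtain ⟨k, rfl⟩ : ∃ k, m = k + 1 := ⟨m - 1, by omega⟩
  rw [Nat.add_sub_cancel] at h
  have h0 := chainL_zero _ a k x h
  rw [circ_quad _ (by omega), quad_shift, sum_pairs, Finset.sum_eq_zero, mul_zero]
  · intro i hi
    rw [Finset.mem_range] at hi
    have key : perx a (2 * i + 1) * perx x (2 * i + 1)
        + perx a (2 * i + 1 + 1) * perx x (2 * i + 1 + 2) = 0 := by
      by_cases hik : i < k
      · exact h0 i hik
      · obtain rfl : i = k := by omega
        have h1 := chain (perx a) (perx x) 1 i h0
        rw [Finset.prod_range_succ', Finset.prod_range_succ] at hp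
        have hi1 : Odd i := by
          rcases Nat.even_or_odd i with h | h
          · exact absurd hme (by simp [h, parity_simps])
          · exact h
        have e1 := perx_per a 0
        have e2 := perx_per x 1
        rw [zero_add] at e1
        rw [show 1 + 2 * (i + 1) = 2 * i + 1 + 2 by ring] at e2
        rw [show 2 * i + 1 + 1 = 2 * (i + 1) by ring, e1, e2]
        have hR := prod_pos' a ha i (fun i => 2 * i + 1 + 1)
        simp only [Finset.prod_neg, Finset.card_range, hi1.neg_one_pow] at h1 hR
        simp only [mul_zero, mul_add, mul_one, add_assoc, Nat.reduceAdd] at hp h1 hR ⊢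
        set R := ∏ i ∈ Finset.range i, perx a (2 * i + 2)
        set P := ∏ i ∈ Finset.range i, perx a (2 * i + 1)
        have hR0 : R ≠ 0 := by intro h; rw [h] at hR; simp at hR
        apply mul_left_cancel₀ hR0
        linear_combination (-perx a (2*i+1)) * h1 + perx x 1 * hp
    linear_combination (perx x (2 * i + 2)) * key
  · intro j
    rw [show j + 2 * (k+1) + 1 = j + 1 + 2 * (k+1) by ring, perx_per, perx_per, perx_per]

open Matrix in
lemma ker_start (n : ℕ) [NeZero n] (hn : 3 ≤ n) (a x : Fin n → ℝ) (ha : ∀ i, a i < 0)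
    (hx : circMat n a *ᵥ x = 0) (h0 : perx x 0 = 0) (h1 : perx x 1 = 0) : x = 0 := by
  ext i
  rw [← perx_val x i]
  exact (vanish (perx a) (perx x) (perx_neg a ha) (circ_ker n hn a x hx) h0 h1 i).1

lemma prod_shift (m : ℕ) [NeZero (2 * m)] (a : Fin (2 * m) → ℝ) :
    ∏ i ∈ Finset.range m, -perx a (2 * i + 1 + 1) = ∏ i ∈ Finset.range m, -perx a (2 * i) := by
  cases m with
  | zero => simp
  | succ k =>
    have e1 := perx_per a 0
    rw [zero_add] at e1
    rw [Finset.prod_range_succ, Finset.prod_range_succ', show 2 * k + 1 + 1 = 2 * (k + 1) by ring, e1]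
    simp only [mul_add, mul_one, mul_zero, add_assoc, Nat.reduceAdd]

open Matrix in
lemma ker_odd (n m : ℕ) [NeZero n] (hn : 3 ≤ n) (a x : Fin n → ℝ) (ha : ∀ i, a i < 0)
    (hx : circMat n a *ᵥ x = 0) (hm : Odd m) (hmn : 2 * m = n ∨ 2 * m = n + n) : x = 0 := by
  have hk := circ_ker n hn a x hx
  have hper : ∀ s, perx x (2 * m + s) = perx x s := by
    intro s
    rcases hmn with h | h
    · rw [h, add_comm, perx_per]
    · rw [h, add_comm, ← add_assoc, perx_per, perx_per]
  have : ∀ s, perx x s = 0 := by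
    intro s
    have h1 := chain (perx a) (perx x) s m (fun i _ => hk _)
    rw [hper, hm.neg_one_pow] at h1
    have hR := prod_pos' a ha m (fun i => 2 * i + s + 1)
    have hP := prod_pos' a ha m (fun i => 2 * i + s)
    have h2 := (add_pos hR hP).ne'
    apply (mul_eq_zero.mp _).resolve_left h2
    linear_combination h1
  exact ker_start n hn a x ha hx (this 0) (this 1)

open Matrix in
lemma ker_even (m : ℕ) [NeZero (2 * m)] (hm : 2 ≤ m) (hme : Even m) (a x : Fin (2 * m) → ℝ)
    (ha : ∀ i, a i < 0) (hx : circMat (2 * m) a *ᵥ x = 0)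
    (hp : ∏ i ∈ Finset.range m, perx a (2 * i) ≠ ∏ i ∈ Finset.range m, perx a (2 * i + 1)) :
    x = 0 := by
  have hk := circ_ker (2 * m) (by omega) a x hx
  have hp' : ∏ i ∈ Finset.range m, -perx a (2 * i) ≠ ∏ i ∈ Finset.range m, -perx a (2 * i + 1) := by
    simpa [Finset.prod_neg, hme.neg_one_pow] using hp
  have hper : ∀ s, perx x (2 * m + s) = perx x s := by
    intro s
    rw [add_comm, perx_per]
  have g0 := chain (perx a) (perx x) 0 m (fun i _ => hk _)
  have g1 := chain (perx a) (perx x) 1 m (fun i _ => hk _)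
  rw [hper, hme.neg_one_pow] at g0 g1
  rw [prod_shift] at g1
  simp only [add_zero] at g0
  refine ker_start _ (by omega) a x ha hx ?_ ?_
  · apply (mul_eq_zero.mp _).resolve_left (sub_ne_zero.mpr hp')
    linear_combination -g0
  · apply (mul_eq_zero.mp _).resolve_left (sub_ne_zero.mpr hp')
    linear_combination g1

/-- first two coordinates -/
def firstL (n : ℕ) [NeZero n] : (Fin n → ℝ) →ₗ[ℝ] (Fin 2 → ℝ) :=
  LinearMap.pi fun i => LinearMap.proj (Fin.ofNat n (i : ℕ))

/-- Signature of the cyclic matrix `circ(a_1,…,a_n)` with negative weights: it is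
degenerate of signature `(n/2 - 1, n/2 - 1)` exactly when `n ≡ 0 [4]` and the even
and odd products of the weights agree; otherwise it is nondegenerate, of signature
`(n/2, n/2)` for even `n`, `((n-1)/2, (n+1)/2)` for `n ≡ 1 [4]` and
`((n+1)/2, (n-1)/2)` for `n ≡ 3 [4]`. -/
theorem circ_signature (n : ℕ) [NeZero n] (hn : 3 ≤ n) (a : Fin n → ℝ)
    (ha : ∀ i, a i < 0) (h : (circMat n a).IsHermitian) :
    (((n % 4 = 0) ∧
        ∏ k ∈ Finset.univ.filter (fun k : Fin n => (k : ℕ) % 2 = 0), a k =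
          ∏ k ∈ Finset.univ.filter (fun k : Fin n => (k : ℕ) % 2 = 1), a k) →
      ((circMat n a).det = 0 ∧
        Fintype.card {i // 0 < h.eigenvalues i} = n / 2 - 1 ∧
        Fintype.card {i // h.eigenvalues i < 0} = n / 2 - 1)) ∧
    ((¬ ((n % 4 = 0) ∧
        ∏ k ∈ Finset.univ.filter (fun k : Fin n => (k : ℕ) % 2 = 0), a k =
          ∏ k ∈ Finset.univ.filter (fun k : Fin n => (k : ℕ) % 2 = 1), a k)) →
      ((circMat n a).det ≠ 0 ∧
        (n % 2 = 0 →
          Fintype.card {i // 0 < h.eigenvalues i} = n / 2 ∧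
          Fintype.card {i // h.eigenvalues i < 0} = n / 2) ∧
        (n % 4 = 1 →
          Fintype.card {i // 0 < h.eigenvalues i} = (n - 1) / 2 ∧
          Fintype.card {i // h.eigenvalues i < 0} = (n + 1) / 2) ∧
        (n % 4 = 3 →
          Fintype.card {i // 0 < h.eigenvalues i} = (n + 1) / 2 ∧
          Fintype.card {i // h.eigenvalues i < 0} = (n - 1) / 2))) := by
  have htri := tri_card h.eigenvalues
  have hdet := det_iff _ h
  have hposle := pos_card _ h (evenL n ((n + 1) / 2)) fun x hx => (iso_quad n hn a x hx).le
  have hnegle := neg_card _ h (evenL n ((n + 1) / 2)) fun x hx => (iso_quad n hn a x hx).ge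
  rw [prod_fin, prod_fin]
  constructor
  · rintro ⟨h4, hp⟩
    obtain ⟨m, rfl⟩ : ∃ m, n = 2 * m := ⟨n / 2, by omega⟩
    rw [prod_filter0, prod_filter1] at hp
    have hme : Even m := by rw [Nat.even_iff]; omega
    have hq := fun x hx => even_quad m (by omega) hme a x ha hp hx
    have h1 := pos_card _ h (chainL (2 * m) a (m - 1)) fun x hx => (hq x hx).le
    have h2 := neg_card _ h (chainL (2 * m) a (m - 1)) fun x hx => (hq x hx).ge
    have h3 := zero_card _ h (firstL (2 * m)) fun x hx hA => by
      refine ker_start _ hn a x ha hA ?_ ?_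
      · exact congrFun hx 0
      · exact congrFun hx 1
    refine ⟨hdet.mpr ?_, ?_, ?_⟩ <;> omega
  · intro hnot
    have hz : Fintype.card {i // h.eigenvalues i = 0} ≤ 0 := by
      refine zero_card _ h 0 fun x _ hx => ?_
      rcases Nat.even_or_odd' n with ⟨m, rfl | rfl⟩
      · rcases Nat.even_or_odd m with hme | hmo
        · rw [prod_filter0, prod_filter1] at hnot
          refine ker_even m (by omega) hme a x ha hx fun hp => hnot ⟨?_, hp⟩
          rw [Nat.even_iff] at hme; omega
        · exact ker_odd _ m hn a x ha hx hmo (Or.inl rfl)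
      · exact ker_odd _ (2 * m + 1) hn a x ha hx ⟨m, rfl⟩ (Or.inr (by ring))
    refine ⟨fun h0 => ?_, fun h2 => ?_, fun h1 => ?_, fun h3 => ?_⟩
    · have := hdet.mp h0
      omega
    · omega
    · obtain ⟨m, rfl⟩ : ∃ m, n = 2 * m + 1 := ⟨n / 2, by omega⟩
      have := pos_card _ h (chainL (2 * m + 1) a m) fun x hx => by
        have hs := odd_sign m a x ha hx
        rw [Even.neg_one_pow (by rw [Nat.even_iff]; omega)] at hs
        rw [odd_quad m (by omega) a x hx]
        nlinarith [perx_neg a ha 0]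
      omega
    · obtain ⟨m, rfl⟩ : ∃ m, n = 2 * m + 1 := ⟨n / 2, by omega⟩
      have := neg_card _ h (chainL (2 * m + 1) a m) fun x hx => by
        have hs := odd_sign m a x ha hx
        rw [Odd.neg_one_pow (by rw [Nat.odd_iff]; omega)] at hs
        rw [odd_quad m (by omega) a x hx]
        nlinarith [perx_neg a ha 0]
      omega
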